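/- Let k be a field of characteristic zero, n ≥ 1, A = k[x]/(x^{n+1}), and B = A ⊗_k A. The graded ring HH^*(A;A) = ⊕_{m≥0} Ext^m_B(A,A), with the Yoneda (composition) product, is isomorphic as a graded ring to k[x,u,t]/(x^{n+1}, u², x^n t, u x^n), where x, u, t have cohomological degrees 0, 1, 2 respectively. -/

import Mathlib

open Polynomial TensorProduct CategoryTheory

noncomputable section

/-- `A = k[x]/(x^{n+1})`, the truncated polynomial ring over the field `k`. -/
abbrev A (k : Type) [Field k] (n : ℕ) : Type := AdjoinRoot ((X : k[X]) ^ (n + 1))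

/-- `B = A ⊗_k A`. -/
abbrev B (k : Type) [Field k] (n : ℕ) : Type := A k n ⊗[k] A k n

/-- `A` is a `B`-module via the multiplication map `μ(a ⊗ b) = ab`. -/
instance (k : Type) [Field k] (n : ℕ) : Algebra (B k n) (A k n) :=
  (Algebra.TensorProduct.lmul' k (S := A k n)).toRingHom.toAlgebra

instance (k : Type) [Field k] (n : ℕ) : HasDerivedCategory.{1} (ModuleCat.{0} (B k n)) :=
  HasDerivedCategory.standard _

instance (k : Type) [Field k] (n : ℕ) : HasExt.{1} (ModuleCat.{0} (B k n)) :=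
  hasExt_of_hasDerivedCategory _

/-- `A` as an object of the category of `B`-modules. -/
def M (k : Type) [Field k] (n : ℕ) : ModuleCat.{0} (B k n) := ModuleCat.of (B k n) (A k n)

/-- The ideal `(x^{n+1}, u², xⁿt, uxⁿ)` of `k[x,u,t]`, where `x = X 0`, `u = X 1`,
`t = X 2`. -/
def I (k : Type) [Field k] (n : ℕ) : Ideal (MvPolynomial (Fin 3) k) :=
  Ideal.span {MvPolynomial.X 0 ^ (n + 1), MvPolynomial.X 1 ^ 2,
    MvPolynomial.X 0 ^ n * MvPolynomial.X 2,
    MvPolynomial.X 1 * MvPolynomial.X 0 ^ n}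

/-- The ring `k[x,u,t]/(x^{n+1}, u², xⁿt, uxⁿ)`. -/
abbrev R (k : Type) [Field k] (n : ℕ) : Type := MvPolynomial (Fin 3) k ⧸ I k n

/-- The degree-`m` component of `R k n`, for the grading in which `x, u, t` have
cohomological degrees `0, 1, 2` respectively. -/
def G (k : Type) [Field k] (n m : ℕ) : Submodule k (R k n) :=
  (MvPolynomial.weightedHomogeneousSubmodule k (![0, 1, 2] : Fin 3 → ℕ) m).map
    (Ideal.Quotient.mkₐ k (I k n)).toLinearMap

namespace HHaux

open Abelian

structure Dat (S T : Type) [CommRing S] [CommRing T] [Algebra S T] where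
  (D N h x : S)
  surj : Function.Surjective (algebraMap S T)
  ker : ∀ b : S, algebraMap S T b = 0 ↔ D ∣ b
  annD : ∀ b, D * b = 0 → N ∣ b
  annN : ∀ b, N * b = 0 → D ∣ b
  DN : D * N = 0
  Dh : D * h = x * N
  xh : algebraMap S T (x * h) = 0
  ann : ∀ b : S, algebraMap S T (N * b) = 0 → ∃ c : S, algebraMap S T b = algebraMap S T (x * c)

variable {S T : Type} [CommRing S] [CommRing T] [Algebra S T] (d : Dat S T)

namespace Dat

/-- map out of `T`, given by a vector killed by `D`. -/
def out {V : Type} [AddCommGroup V] [Module S V] (z : V) (hz : d.D • z = 0) : T →ₗ[S] V :=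
  ((LinearMap.ker (Algebra.linearMap S T)).liftQ (LinearMap.toSpanSingleton S V z) (by
    intro b hb
    obtain ⟨c, rfl⟩ := (d.ker b).1 hb
    simp [mul_comm, mul_smul, hz])) ∘ₗ
  ((Algebra.linearMap S T).quotKerEquivOfSurjective d.surj).symm.toLinearMap

lemma out_apply {V : Type} [AddCommGroup V] [Module S V] (z : V) (hz : d.D • z = 0) (b : S) :
    d.out z hz (algebraMap S T b) = b • z := by
  have : ((Algebra.linearMap S T).quotKerEquivOfSurjective d.surj).symm (algebraMap S T b) =
    Submodule.Quotient.mk b := by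
    rw [LinearEquiv.symm_apply_eq]; rfl
  rw [out, LinearMap.comp_apply, LinearEquiv.coe_coe, this]; rfl

include d in
lemma hom_ext_T {V : Type} [AddCommGroup V] [Module S V] {f g : T →ₗ[S] V} (h : f 1 = g 1) :
    f = g := by
  ext a
  obtain ⟨b, rfl⟩ := d.surj a
  rw [Algebra.algebraMap_eq_smul_one, map_smul, map_smul, h]

abbrev K : Type := S ⧸ Ideal.span {d.N}

def outK {V : Type} [AddCommGroup V] [Module S V] (z : V) (hz : d.N • z = 0) : d.K →ₗ[S] V :=
  Submodule.liftQ (Ideal.span {d.N}) (LinearMap.toSpanSingleton S V z) (by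
    intro b hb
    obtain ⟨c, rfl⟩ := Ideal.mem_span_singleton.1 hb
    simp [mul_comm, mul_smul, hz])

lemma outK_apply {V : Type} [AddCommGroup V] [Module S V] (z : V) (hz : d.N • z = 0) (b : S) :
    d.outK z hz (Ideal.Quotient.mk _ b) = b • z := rfl

lemma hom_ext_K {V : Type} [AddCommGroup V] [Module S V] {f g : d.K →ₗ[S] V}
    (h : f (Ideal.Quotient.mk _ 1) = g (Ideal.Quotient.mk _ 1)) :
    f = g := by
  ext
  simpa using h

def i1 : T →ₗ[S] S := d.out d.N d.DN
def p1 : S →ₗ[S] d.K := Submodule.mkQ _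
def i2 : d.K →ₗ[S] S := d.outK d.D (by simp [mul_comm, d.DN])
def p2 (_ : Dat S T) : S →ₗ[S] T := Algebra.linearMap S T
def f : d.K →ₗ[S] T := d.outK (algebraMap S T d.x) (by
  rw [Algebra.smul_def, ← map_mul, d.ker, mul_comm, ← d.Dh]; exact dvd_mul_right _ _)
def g : T →ₗ[S] d.K := d.out (Ideal.Quotient.mk _ d.h) (by
  change Ideal.Quotient.mk _ (d.D * d.h) = 0
  rw [d.Dh, Ideal.Quotient.eq_zero_iff_mem, Ideal.mem_span_singleton]; exact dvd_mul_left _ _)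

lemma out_one {V : Type} [AddCommGroup V] [Module S V] (z : V) (hz : d.D • z = 0) :
    d.out z hz 1 = z := by
  have := d.out_apply z hz 1
  simpa using this

lemma outK_one {V : Type} [AddCommGroup V] [Module S V] (z : V) (hz : d.N • z = 0) :
    d.outK z hz (Ideal.Quotient.mk _ 1) = z := by
  rw [outK_apply, one_smul]

@[simp] lemma i1_apply (b : S) : d.i1 (algebraMap S T b) = b * d.N := d.out_apply _ _ _
@[simp] lemma p1_apply (b : S) : d.p1 b = Ideal.Quotient.mk _ b := rfl
@[simp] lemma i2_apply (b : S) : d.i2 (Ideal.Quotient.mk _ b) = b * d.D := rfl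
@[simp] lemma p2_apply (b : S) : d.p2 b = algebraMap S T b := rfl
@[simp] lemma f_apply (b : S) : d.f (Ideal.Quotient.mk _ b) = algebraMap S T (b * d.x) := by
  rw [map_mul, ← Algebra.smul_def]; rfl
@[simp] lemma g_apply (b : S) : d.g (algebraMap S T b) = Ideal.Quotient.mk _ (b * d.h) :=
  d.out_apply _ _ _

abbrev MT (_ : Dat S T) : ModuleCat.{0} S := ModuleCat.of S T
abbrev MK : ModuleCat.{0} S := ModuleCat.of S d.K
abbrev MS (_ : Dat S T) : ModuleCat.{0} S := ModuleCat.of S S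

def S1 : ShortComplex (ModuleCat.{0} S) where
  X₁ := d.MT
  X₂ := d.MS
  X₃ := d.MK
  f := ModuleCat.ofHom d.i1
  g := ModuleCat.ofHom d.p1
  zero := by
    ext a
    obtain ⟨b, rfl⟩ := d.surj a
    change d.p1 (d.i1 _) = 0
    rw [i1_apply, p1_apply, Ideal.Quotient.eq_zero_iff_mem, Ideal.mem_span_singleton]
    exact dvd_mul_left _ _

def S2 : ShortComplex (ModuleCat.{0} S) where
  X₁ := d.MK
  X₂ := d.MS
  X₃ := d.MT
  f := ModuleCat.ofHom d.i2
  g := ModuleCat.ofHom d.p2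
  zero := by
    ext
    change d.p2 (d.i2 (Ideal.Quotient.mk _ 1)) = 0
    rw [i2_apply, p2_apply, one_mul, d.ker]

lemma hS1 : d.S1.ShortExact where
  exact := by
    rw [ShortComplex.ShortExact.moduleCat_exact_iff_function_exact]
    intro (b : S)
    constructor
    · intro hb
      have hb : Ideal.Quotient.mk (Ideal.span {d.N}) b = 0 := hb
      rw [Ideal.Quotient.eq_zero_iff_mem, Ideal.mem_span_singleton] at hb
      obtain ⟨c, rfl⟩ := hb
      exact ⟨algebraMap S T c, (d.i1_apply c).trans (mul_comm _ _)⟩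
    · rintro ⟨a, rfl⟩
      exact congr($(d.S1.zero) a)
  mono_f := by
    rw [ModuleCat.mono_iff_injective]
    change Function.Injective d.i1
    rw [injective_iff_map_eq_zero]
    intro a ha
    obtain ⟨b, rfl⟩ := d.surj a
    rw [i1_apply, mul_comm] at ha
    exact (d.ker b).2 (d.annN b ha)
  epi_g := by
    rw [ModuleCat.epi_iff_surjective]
    exact Submodule.mkQ_surjective _

lemma hS2 : d.S2.ShortExact where
  exact := by
    rw [ShortComplex.ShortExact.moduleCat_exact_iff_function_exact]
    intro (b : S)
    constructor
    · intro hb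
      have hb : algebraMap S T b = 0 := hb
      rw [d.ker] at hb
      obtain ⟨c, rfl⟩ := hb
      exact ⟨Ideal.Quotient.mk _ c, (d.i2_apply c).trans (mul_comm _ _)⟩
    · rintro ⟨a, rfl⟩
      exact congr($(d.S2.zero) a)
  mono_f := by
    rw [ModuleCat.mono_iff_injective]
    change Function.Injective d.i2
    rw [injective_iff_map_eq_zero]
    intro a ha
    obtain ⟨b, rfl⟩ := Ideal.Quotient.mk_surjective a
    rw [i2_apply, mul_comm] at ha
    rw [Ideal.Quotient.eq_zero_iff_mem, Ideal.mem_span_singleton]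
    exact d.annD b ha
  epi_g := by
    rw [ModuleCat.epi_iff_surjective]
    exact d.surj

def φ12 : d.S1 ⟶ d.S2 where
  τ₁ := ModuleCat.ofHom d.g
  τ₂ := ModuleCat.ofHom (LinearMap.toSpanSingleton S S d.x)
  τ₃ := ModuleCat.ofHom d.f
  comm₁₂ := by
    ext a
    obtain ⟨b, rfl⟩ := d.surj a
    change d.i2 (d.g _) = (d.i1 _) * d.x
    simp only [g_apply, i2_apply, i1_apply]
    linear_combination b * d.Dh
  comm₂₃ := by
    ext
    change algebraMap S T (1 * d.x) = d.f (Ideal.Quotient.mk _ 1)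
    rw [f_apply]

def φ21 : d.S2 ⟶ d.S1 where
  τ₁ := ModuleCat.ofHom d.f
  τ₂ := ModuleCat.ofHom (LinearMap.toSpanSingleton S S d.h)
  τ₃ := ModuleCat.ofHom d.g
  comm₁₂ := by
    apply ModuleCat.hom_ext
    apply d.hom_ext_K
    change d.i1 (d.f (Ideal.Quotient.mk _ 1)) = (d.i2 (Ideal.Quotient.mk _ 1)) * d.h
    simp only [f_apply, i2_apply, i1_apply]
    linear_combination - d.Dh
  comm₂₃ := by
    ext
    change Ideal.Quotient.mk _ (1 * d.h) = d.g (algebraMap S T 1)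
    simp only [g_apply]

variable [HasExt.{1} (ModuleCat.{0} S)]

def e1 : Ext d.MK d.MT 1 := d.hS1.extClass
def e2 : Ext d.MT d.MK 1 := d.hS2.extClass
abbrev mf : Ext d.MK d.MT 0 := Ext.mk₀ (ModuleCat.ofHom d.f)
abbrev mg : Ext d.MT d.MK 0 := Ext.mk₀ (ModuleCat.ofHom d.g)

lemma nat12 : d.e1.comp d.mg (add_zero 1) = d.mf.comp d.e2 (zero_add 1) :=
  ShortComplex.ShortExact.extClass_naturality d.hS1 d.hS2 d.φ12

lemma nat21 : d.e2.comp d.mf (add_zero 1) = d.mg.comp d.e1 (zero_add 1) :=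
  ShortComplex.ShortExact.extClass_naturality d.hS2 d.hS1 d.φ21

def t : Ext d.MT d.MT 2 := d.e2.comp d.e1 rfl
def u : Ext d.MT d.MT 1 := d.e2.comp d.mf rfl

lemma u_sq : d.u.comp d.u (rfl : 1 + 1 = 2) = 0 := by
  have hgf : d.mg.comp d.mf (zero_add 0) = 0 := by
    rw [Ext.mk₀_comp_mk₀, Ext.mk₀_eq_zero_iff, ← ModuleCat.ofHom_comp]
    have : d.f ∘ₗ d.g = 0 := by
      apply d.hom_ext_T
      have h1 := d.g_apply 1
      rw [map_one] at h1
      simp only [LinearMap.comp_apply, h1, f_apply]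
      simpa [mul_comm] using d.xh
    rw [this]; rfl
  unfold u
  rw [Ext.comp_assoc_of_second_deg_zero, ← Ext.comp_assoc_of_third_deg_zero (a₁₂ := 1),
    ← nat12, Ext.comp_assoc_of_third_deg_zero, hgf]
  simp

lemma ut : d.u.comp d.t (rfl : 1 + 2 = 3) = d.t.comp d.u (rfl : 2 + 1 = 3) := by
  unfold t
  rw [Ext.comp_assoc (a₂₃ := 2) d.e2 d.e1 d.u rfl rfl rfl]
  conv_rhs => rw [u, nat21]
  unfold u
  rw [Ext.comp_assoc_of_second_deg_zero,
    ← Ext.comp_assoc (a₁₂ := 1) d.mf d.e2 d.e1 rfl rfl rfl, ← nat12,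
    Ext.comp_assoc_of_second_deg_zero]

def γ : ∀ m : ℕ, Ext d.MT d.MT m
  | 0 => Ext.mk₀ (𝟙 _)
  | 1 => d.u
  | (m + 2) => d.t.comp (γ m) (add_comm 2 m)

lemma γ_succ (m m' : ℕ) (h : 2 + m = m') : d.t.comp (d.γ m) h = d.γ m' := by
  obtain rfl : m' = m + 2 := by omega
  rfl

lemma u_γ : ∀ (m m' : ℕ) (h : 1 + m = m'), d.u.comp (d.γ m) h = if Odd m then 0 else d.γ m'
  | 0, m', h => by
    obtain rfl : m' = 1 := by omega
    simp [γ]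
  | 1, m', h => by
    obtain rfl : m' = 2 := by omega
    simpa [γ] using d.u_sq
  | m + 2, m', h => by
    have ih := u_γ m (m + 1) (add_comm _ _)
    rw [γ, ← Ext.comp_assoc (a₁₂ := 3) d.u d.t (d.γ m) rfl (by omega) (by omega), ut,
      Ext.comp_assoc (a₂₃ := m + 1) d.t d.u (d.γ m) rfl (by omega) (by omega), ih]
    have : Odd (m + 2) ↔ Odd m := by simp [Nat.odd_add]
    simp only [this]
    split_ifs
    · simp
    · rw [γ_succ]

lemma γ_mul : ∀ (a b c : ℕ) (h : a + b = c),
    (d.γ a).comp (d.γ b) h = if Odd a ∧ Odd b then 0 else d.γ c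
  | 0, b, c, h => by
    obtain rfl : c = b := by omega
    simp [γ]
  | 1, b, c, h => by
    simpa [γ] using d.u_γ b c h
  | a + 2, b, c, h => by
    have ih := γ_mul a b (a + b) rfl
    rw [γ, Ext.comp_assoc (a₂₃ := a + b) d.t (d.γ a) (d.γ b) (by omega) rfl (by omega), ih]
    have : Odd (a + 2) ↔ Odd a := by simp [Nat.odd_add]
    simp only [this]
    split_ifs
    · simp
    · rw [γ_succ]

instance : Projective d.MS :=
  (IsProjective.iff_projective S).1 inferInstance

lemma les3_1 {m m' : ℕ} (α : Ext d.MK d.MT m') (h : 1 + m = m') :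
    ∃ β : Ext d.MT d.MT m, d.e1.comp β h = α := by
  subst h
  exact Ext.contravariant_sequence_exact₃ d.hS1 d.MT α
    (by
      have : ∀ (q : ℕ) (_ : 1 + m = q) (x : Ext d.MS d.MT q), x = 0 := by
        intro q hq x
        obtain rfl : q = m + 1 := by omega
        exact Ext.eq_zero_of_projective x
      exact this _ rfl _) rfl

lemma les3_2 {m m' : ℕ} (α : Ext d.MT d.MT m') (h : 1 + m = m') :
    ∃ β : Ext d.MK d.MT m, d.e2.comp β h = α := by
  subst h
  exact Ext.contravariant_sequence_exact₃ d.hS2 d.MT α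
    (by
      have : ∀ (q : ℕ) (_ : 1 + m = q) (x : Ext d.MS d.MT q), x = 0 := by
        intro q hq x
        obtain rfl : q = m + 1 := by omega
        exact Ext.eq_zero_of_projective x
      exact this _ rfl _) rfl

lemma les1_1 {m m' : ℕ} (h : 1 + m = m') (β : Ext d.MT d.MT m) (hβ : d.e1.comp β h = 0) :
    ∃ x : Ext d.MS d.MT m, (Ext.mk₀ (ModuleCat.ofHom d.i1)).comp x (zero_add m) = β :=
  Ext.contravariant_sequence_exact₁ d.hS1 d.MT _ _ hβ

lemma les1_2 {m m' : ℕ} (h : 1 + m = m') (β : Ext d.MK d.MT m) (hβ : d.e2.comp β h = 0) :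
    ∃ x : Ext d.MS d.MT m, (Ext.mk₀ (ModuleCat.ofHom d.i2)).comp x (zero_add m) = β :=
  Ext.contravariant_sequence_exact₁ d.hS2 d.MT _ _ hβ

lemma e1_i1 : d.e1.comp (Ext.mk₀ (ModuleCat.ofHom d.i1)) (add_zero 1) = 0 :=
  ShortComplex.ShortExact.extClass_comp d.hS1

lemma t_surj (m m' : ℕ) (h : 2 + m = m') (α : Ext d.MT d.MT m') : ∃ β, d.t.comp β h = α := by
  obtain ⟨β, rfl⟩ := d.les3_2 (m := m + 1) α (by omega)
  obtain ⟨β', rfl⟩ := d.les3_1 (m := m) β (by omega)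
  exact ⟨β', Ext.comp_assoc d.e2 d.e1 β' _ _ (by omega)⟩

lemma t_inj' (m m' : ℕ) (h : 2 + m = m') (β : Ext d.MT d.MT m) (hβ : d.t.comp β h = 0) :
    d.e1.comp β (add_comm 1 m) = 0 := by
  rw [t, Ext.comp_assoc (a₂₃ := m + 1) d.e2 d.e1 β rfl (by omega) (by omega)] at hβ
  obtain ⟨x, hx⟩ := d.les1_2 _ _ hβ
  have hx0 : x = 0 := Ext.eq_zero_of_projective (P := d.MS) _
  rw [← hx, hx0, Ext.comp_zero]

lemma t_inj (m m' : ℕ) (h : 2 + (m + 1) = m') (β : Ext d.MT d.MT (m + 1))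
    (hβ : d.t.comp β h = 0) : β = 0 := by
  obtain ⟨x, hx⟩ := d.les1_1 _ _ (d.t_inj' _ _ h β hβ)
  have hx0 : x = 0 := Ext.eq_zero_of_projective (P := d.MS) _
  rw [← hx, hx0, Ext.comp_zero]

lemma smul_mk₀ {X Y : ModuleCat.{0} S} (b : S) (f : X ⟶ Y) :
    b • Ext.mk₀ f = Ext.mk₀ (b • f) := (Ext.mk₀_smul b f).symm

include d in
lemma hom_ext_T' {V : ModuleCat.{0} S} {f g : d.MT ⟶ V} : f = g ↔ f.hom (1 : T) = g.hom (1 : T) :=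
  ⟨fun h => by rw [h], fun h => ModuleCat.hom_ext (d.hom_ext_T h)⟩

lemma ker0 (b : S) : b • d.γ 0 = 0 ↔ algebraMap S T b = 0 := by
  rw [γ, smul_mk₀, Ext.mk₀_eq_zero_iff, hom_ext_T']
  change b • (1 : T) = 0 ↔ _
  rw [Algebra.algebraMap_eq_smul_one]

lemma gen0 (α : Ext d.MT d.MT 0) : ∃ b : S, α = b • d.γ 0 := by
  obtain ⟨f, rfl⟩ := (Ext.mk₀_bijective _ _).2 α
  obtain ⟨b, hb⟩ := d.surj (f.hom (1 : T))
  refine ⟨b, ?_⟩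
  rw [γ, smul_mk₀]
  congr 1
  rw [hom_ext_T', ← hb, Algebra.algebraMap_eq_smul_one]
  rfl

lemma gen1 (α : Ext d.MT d.MT 1) : ∃ b : S, α = b • d.γ 1 := by
  obtain ⟨β, rfl⟩ := d.les3_2 (m := 0) α rfl
  obtain ⟨φ, rfl⟩ := (Ext.mk₀_bijective d.MK d.MT).2 β
  let φ' : d.K →ₗ[S] T := φ.hom
  obtain ⟨b, hb⟩ := d.surj (φ' (Ideal.Quotient.mk _ 1))
  have h0 : algebraMap S T (d.N * b) = 0 := by
    rw [map_mul, hb, ← Algebra.smul_def, ← map_smul]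
    have : d.N • (Ideal.Quotient.mk (Ideal.span {d.N}) 1) = 0 := by
      change Ideal.Quotient.mk (Ideal.span {d.N}) (d.N * 1) = 0
      rw [Ideal.Quotient.eq_zero_iff_mem, Ideal.mem_span_singleton, mul_one]
    rw [this, map_zero]
  obtain ⟨c, hc⟩ := d.ann b h0
  refine ⟨c, ?_⟩
  have : φ = c • ModuleCat.ofHom d.f := by
    apply ModuleCat.hom_ext
    apply d.hom_ext_K
    change φ' (Ideal.Quotient.mk _ 1) = c • d.f (Ideal.Quotient.mk _ 1)
    rw [f_apply, ← hb, hc, one_mul, map_mul, mul_comm, Algebra.smul_def]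
  rw [this, Ext.mk₀_smul, Ext.comp_smul]
  rfl

lemma ker1 (b : S) : b • d.γ 1 = 0 ↔ algebraMap S T (b * d.x) = 0 := by
  have key : b • d.γ 1 = d.e2.comp (Ext.mk₀ (b • ModuleCat.ofHom d.f)) (add_zero 1) := by
    rw [Ext.mk₀_smul, Ext.comp_smul]; rfl
  rw [key]
  constructor
  · intro h
    obtain ⟨x, hx⟩ := d.les1_2 _ _ h
    obtain ⟨φ, rfl⟩ := (Ext.mk₀_bijective d.MS d.MT).2 x
    rw [Ext.mk₀_comp_mk₀] at hx
    have hx := (Ext.mk₀_bijective _ _).1 hx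
    have h1 : φ.hom (d.i2 (Ideal.Quotient.mk _ 1)) = b • d.f (Ideal.Quotient.mk _ 1) :=
      congr($(hx) (Ideal.Quotient.mk _ (1 : S)))
    rw [f_apply, i2_apply, one_mul, one_mul, Algebra.smul_def, ← map_mul] at h1
    rw [← h1]
    have h2 : φ.hom (d.D • (1 : S)) = d.D • (φ.hom (1 : S) : T) := map_smul _ _ _
    rw [smul_eq_mul, mul_one, Algebra.smul_def, (d.ker d.D).2 dvd_rfl, zero_mul] at h2
    exact h2
  · intro h
    have : b • ModuleCat.ofHom d.f = 0 := by
      apply ModuleCat.hom_ext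
      apply d.hom_ext_K
      change b • d.f (Ideal.Quotient.mk _ 1) = 0
      rw [f_apply, one_mul, Algebra.smul_def, ← map_mul, h]
    rw [this]; simp

lemma γ2_smul (m : ℕ) (b : S) : b • d.γ (m + 2) = d.t.comp (b • d.γ m) (add_comm 2 m) := by
  rw [Ext.comp_smul]; rfl

lemma ker2 (b : S) : b • d.γ 2 = 0 ↔ ∃ c, algebraMap S T b = algebraMap S T (d.N * c) := by
  rw [γ2_smul]
  constructor
  · intro h
    obtain ⟨x, hx⟩ := d.les1_1 _ _ (d.t_inj' _ _ _ _ h)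
    obtain ⟨φ, rfl⟩ := (Ext.mk₀_bijective d.MS d.MT).2 x
    rw [γ, smul_mk₀, Ext.mk₀_comp_mk₀] at hx
    have hx := (Ext.mk₀_bijective _ _).1 hx
    have h1 : φ.hom (d.i1 (1 : T)) = b • (1 : T) := congr($(hx) (1 : T))
    have h3 := d.i1_apply 1
    rw [map_one, one_mul] at h3
    obtain ⟨c, hc⟩ := d.surj (φ.hom (1 : S))
    refine ⟨c, ?_⟩
    rw [Algebra.algebraMap_eq_smul_one, ← h1, h3, map_mul, hc]
    have h2 : φ.hom (d.N • (1 : S)) = d.N • (φ.hom (1 : S) : T) := map_smul _ _ _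
    rw [smul_eq_mul, mul_one, Algebra.smul_def] at h2
    exact h2
  · rintro ⟨c, hc⟩
    have : b • d.γ 0 = (Ext.mk₀ (ModuleCat.ofHom d.i1)).comp
        (Ext.mk₀ (ModuleCat.ofHom (c • d.p2) : d.MS ⟶ d.MT)) (zero_add 0) := by
      rw [Ext.mk₀_comp_mk₀, γ, smul_mk₀]
      congr 1
      rw [hom_ext_T']
      change b • (1 : T) = c • d.p2 (d.i1 (1 : T))
      have h3 := d.i1_apply 1
      rw [map_one, one_mul] at h3
      rw [h3, p2_apply, ← Algebra.algebraMap_eq_smul_one, hc, Algebra.smul_def, mul_comm, map_mul]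
    have h0 : d.t.comp (Ext.mk₀ (ModuleCat.ofHom d.i1)) (add_zero 2) = 0 := by
      rw [t, Ext.comp_assoc_of_third_deg_zero, e1_i1, Ext.comp_zero]
    rw [this, ← Ext.comp_assoc (a₁₂ := 2) d.t _ _ rfl (by omega) (by omega), h0, Ext.zero_comp]

lemma gen : ∀ (m : ℕ) (α : Ext d.MT d.MT m), ∃ b : S, α = b • d.γ m
  | 0, α => d.gen0 α
  | 1, α => d.gen1 α
  | m + 2, α => by
    obtain ⟨β, rfl⟩ := d.t_surj m (m + 2) (add_comm _ _) α
    obtain ⟨b, rfl⟩ := gen m β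
    exact ⟨b, (d.γ2_smul m b).symm⟩

lemma ker_step (m : ℕ) (b : S) : b • d.γ (m + 3) = 0 ↔ b • d.γ (m + 1) = 0 := by
  rw [γ2_smul]
  exact ⟨d.t_inj _ _ _ _, fun h => by rw [h, Ext.comp_zero]⟩

lemma smul_congr {b c : S} (h : algebraMap S T b = algebraMap S T c) (m : ℕ) :
    b • d.γ m = c • d.γ m := by
  rw [← sub_eq_zero, ← sub_smul]
  have h0 : (b - c) • d.γ 0 = 0 := by rw [ker0, map_sub, h, sub_self]
  have h1 : (d.γ 0).comp (d.γ m) (zero_add m) = d.γ m := by simp [γ]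
  rw [← h1, ← Ext.smul_comp, h0, Ext.zero_comp]

lemma ker_odd (j : ℕ) (b : S) :
    b • d.γ (2 * j + 1) = 0 ↔ algebraMap S T (b * d.x) = 0 := by
  induction j with
  | zero => exact d.ker1 b
  | succ j ih => exact (d.ker_step (2 * j) b).trans ih

lemma ker_even (j : ℕ) (b : S) :
    b • d.γ (2 * j + 2) = 0 ↔ ∃ c, algebraMap S T b = algebraMap S T (d.N * c) := by
  induction j with
  | zero => exact d.ker2 b
  | succ j ih => exact (d.ker_step (2 * j + 1) b).trans ih

end Dat
end HHaux

namespace HHaux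

open Abelian


section ring
variable (k : Type) [Field k] (n : ℕ)

def rt : A k n := AdjoinRoot.root _

def ppi : (A k n)[X] →ₐ[k] B k n :=
  (Algebra.TensorProduct.map (AlgHom.id k (A k n)) (AdjoinRoot.mkₐ ((X : k[X]) ^ (n + 1)))).comp
    (polyEquivTensor k (A k n)).toAlgHom

lemma ppi_surj : Function.Surjective (ppi k n) := by
  have h : Function.Surjective
      (Algebra.TensorProduct.map (AlgHom.id k (A k n)) (AdjoinRoot.mkₐ ((X : k[X]) ^ (n + 1)))) :=
    TensorProduct.map_surjective Function.surjective_id AdjoinRoot.mk_surjective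
  exact h.comp (polyEquivTensor k (A k n)).surjective

lemma ppi_eq_zero (f : (A k n)[X]) (hf : ppi k n f = 0) : X ^ (n + 1) ∣ f := by
  have h := Algebra.TensorProduct.lTensor_ker (A := A k n)
    (AdjoinRoot.mkₐ ((X : k[X]) ^ (n + 1))) AdjoinRoot.mk_surjective
  have h1 : (polyEquivTensor k (A k n)) f ∈ RingHom.ker
    (Algebra.TensorProduct.map (AlgHom.id k (A k n)) (AdjoinRoot.mkₐ ((X : k[X]) ^ (n + 1)))) := hf
  rw [h] at h1
  have h2 : RingHom.ker (AdjoinRoot.mkₐ ((X : k[X]) ^ (n + 1))) = Ideal.span {X ^ (n + 1)} := by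
    ext p
    rw [RingHom.mem_ker, Ideal.mem_span_singleton]
    exact AdjoinRoot.mk_eq_zero
  rw [h2, Ideal.map_span, Set.image_singleton, Ideal.mem_span_singleton] at h1
  obtain ⟨c, hc⟩ := h1
  refine ⟨(polyEquivTensor k (A k n)).symm c, ?_⟩
  rw [← (polyEquivTensor k (A k n)).symm_apply_apply f, hc, map_mul]
  congr 1
  simp [polyEquivTensor_symm_apply_tmul_eq_smul]

lemma algMap (b : B k n) : algebraMap (B k n) (A k n) b = Algebra.TensorProduct.lmul' k b := rfl

lemma ppi_C (a : A k n) : ppi k n (C a) = a ⊗ₜ 1 := by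
  simp [ppi]

lemma ppi_X : ppi k n X = 1 ⊗ₜ rt k n := by
  simp [ppi, rt]

lemma mu_ppi (f : (A k n)[X]) : algebraMap (B k n) (A k n) (ppi k n f) = f.eval (rt k n) := by
  have : (algebraMap (B k n) (A k n)).comp (ppi k n).toRingHom = evalRingHom (rt k n) := by
    apply Polynomial.ringHom_ext
    · intro a
      simp only [RingHom.comp_apply, AlgHom.toRingHom_eq_coe, RingHom.coe_coe, ppi_C, algMap]
      simp
    · simp only [RingHom.comp_apply, AlgHom.toRingHom_eq_coe, RingHom.coe_coe, ppi_X, algMap]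
      simp
  exact congr($this f)

lemma rt_pow : rt k n ^ (n + 1) = 0 := by
  have : AdjoinRoot.mk ((X : k[X]) ^ (n + 1)) (X ^ (n + 1)) = 0 := AdjoinRoot.mk_self
  rw [map_pow, AdjoinRoot.mk_X] at this
  exact this

def NN : (A k n)[X] := X ^ (n + 1) /ₘ (X - C (rt k n))

lemma NN_mul : (X - C (rt k n)) * NN k n = X ^ (n + 1) := by
  rw [NN, mul_divByMonic_eq_iff_isRoot]
  simp [rt_pow]

lemma NN_monic : (NN k n).Monic :=
  Monic.of_mul_monic_left (monic_X_sub_C (rt k n)) (by rw [NN_mul]; exact monic_X_pow _)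

lemma ppi_zero_iff (f : (A k n)[X]) : ppi k n f = 0 ↔ X ^ (n + 1) ∣ f := by
  refine ⟨ppi_eq_zero k n f, ?_⟩
  rintro ⟨c, rfl⟩
  rw [map_mul, map_pow, ppi_X, Algebra.TensorProduct.tmul_pow, rt_pow, tmul_zero, zero_mul]

lemma NN_eval : (NN k n).eval (rt k n) = (n + 1) * rt k n ^ n := by
  have := congr((derivative $(NN_mul k n)).eval (rt k n))
  simpa using this

lemma NN_eval' : 2 * (derivative (NN k n)).eval (rt k n) = (n + 1) * (n * rt k n ^ (n - 1)) := by
  have := congr((derivative (derivative $(NN_mul k n))).eval (rt k n))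
  simp [derivative_X_pow] at this
  linear_combination this

def hh : (A k n)[X] := (C (rt k n) * NN k n) /ₘ (X - C (rt k n))

lemma hh_mul : (X - C (rt k n)) * hh k n = C (rt k n) * NN k n := by
  rw [hh, mul_divByMonic_eq_iff_isRoot, IsRoot, eval_mul, eval_C, NN_eval]
  linear_combination ((n : A k n) + 1) * rt_pow k n

lemma hh_eval : (hh k n).eval (rt k n) = rt k n * (derivative (NN k n)).eval (rt k n) := by
  have := congr((derivative $(hh_mul k n)).eval (rt k n))
  simpa using this

lemma x_hh [CharZero k] (hn : 1 ≤ n) : rt k n * (hh k n).eval (rt k n) = 0 := by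
  have h : (2 : k) • (rt k n * (hh k n).eval (rt k n)) = 0 := by
    rw [hh_eval, Algebra.smul_def, map_ofNat]
    obtain ⟨m, rfl⟩ : ∃ m, n = m + 1 := ⟨n - 1, by omega⟩
    have h1 := NN_eval' k (m + 1)
    have h2 := rt_pow k (m + 1)
    rw [Nat.add_sub_cancel] at h1
    linear_combination rt k (m + 1) ^ 2 * h1 + (((m + 1 : ℕ) : A k (m + 1)) + 1) * (m + 1 : ℕ) * h2
  exact (smul_eq_zero.1 h).resolve_left two_ne_zero

def sc (p : k[X]) : B k n := ppi k n (C (AdjoinRoot.mk _ p))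

lemma mu_sc (p : k[X]) : algebraMap (B k n) (A k n) (sc k n p) = AdjoinRoot.mk _ p := by
  rw [sc, mu_ppi, eval_C]

lemma mk_rt (p : k[X]) (m : ℕ) : rt k n ^ m * AdjoinRoot.mk _ p = AdjoinRoot.mk _ (X ^ m * p) := by
  rw [map_mul, map_pow, AdjoinRoot.mk_X, rt]

lemma np1 [CharZero k] : ((n : A k n) + 1) * algebraMap k (A k n) ((n : k) + 1)⁻¹ = 1 := by
  have : ((n : A k n) + 1) = algebraMap k (A k n) ((n : k) + 1) := by simp
  rw [this, ← map_mul, mul_inv_cancel₀, map_one]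
  exact_mod_cast Nat.succ_ne_zero n

def dat [CharZero k] (hn : 1 ≤ n) : Dat (B k n) (A k n) where
  D := ppi k n (X - C (rt k n))
  N := ppi k n (NN k n)
  h := ppi k n (hh k n)
  x := ppi k n (C (rt k n))
  surj a := ⟨ppi k n (C a), by rw [mu_ppi, eval_C]⟩
  ker b := by
    obtain ⟨f, rfl⟩ := ppi_surj k n b
    rw [mu_ppi]
    constructor
    · intro h
      exact map_dvd (ppi k n) (dvd_iff_isRoot.2 h)
    · rintro ⟨c, hc⟩
      obtain ⟨g, rfl⟩ := ppi_surj k n c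
      rw [← mu_ppi, hc, ← map_mul, mu_ppi]
      simp
  annD b hb := by
    obtain ⟨f, rfl⟩ := ppi_surj k n b
    rw [← map_mul, ppi_zero_iff, ← NN_mul] at hb
    obtain ⟨c, hc⟩ := hb
    rw [mul_assoc] at hc
    have := (monic_X_sub_C (rt k n)).isRegular.left hc
    rw [this, map_mul]
    exact dvd_mul_right _ _
  annN b hb := by
    obtain ⟨f, rfl⟩ := ppi_surj k n b
    rw [← map_mul, ppi_zero_iff, ← NN_mul] at hb
    obtain ⟨c, hc⟩ := hb
    rw [mul_comm (X - C (rt k n)), mul_assoc] at hc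
    have := (NN_monic k n).isRegular.left hc
    rw [this, map_mul]
    exact dvd_mul_right _ _
  DN := by
    rw [← map_mul, ppi_zero_iff, NN_mul]
  Dh := by
    rw [← map_mul, ← map_mul, hh_mul]
  xh := by
    rw [← map_mul, mu_ppi, eval_mul, eval_C, x_hh k n hn]
  ann b hb := by
    obtain ⟨p, hp⟩ := AdjoinRoot.mk_surjective (algebraMap (B k n) (A k n) b)
    rw [map_mul, mu_ppi, NN_eval, ← hp] at hb
    have h1 : AdjoinRoot.mk ((X : k[X]) ^ (n + 1)) (X ^ n * p) = 0 := by
      rw [← mk_rt]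
      linear_combination algebraMap k (A k n) ((n : k) + 1)⁻¹ * hb
        - rt k n ^ n * AdjoinRoot.mk _ p * np1 k n
    rw [AdjoinRoot.mk_eq_zero, pow_succ] at h1
    obtain ⟨q, rfl⟩ := (mul_dvd_mul_iff_left (pow_ne_zero n X_ne_zero)).1 h1
    refine ⟨sc k n q, ?_⟩
    rw [map_mul, mu_sc, mu_ppi, eval_C, ← hp, map_mul, AdjoinRoot.mk_X, rt]

end ring

section target
variable (k : Type) [Field k] (n : ℕ)

open MvPolynomial in
def mon (m : ℕ) : MvPolynomial (Fin 3) k := MvPolynomial.X 1 ^ (m % 2) * MvPolynomial.X 2 ^ (m / 2)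

def rho (m : ℕ) : R k n := Ideal.Quotient.mk _ (mon k m)

def qx (i : Fin 3) : R k n := Ideal.Quotient.mk _ (MvPolynomial.X i)

lemma rho_def (m : ℕ) : rho k n m = qx k n 1 ^ (m % 2) * qx k n 2 ^ (m / 2) := by
  simp [rho, mon, qx]

lemma rel1 : qx k n 0 ^ (n + 1) = 0 := by
  rw [qx, ← map_pow, Ideal.Quotient.eq_zero_iff_mem]
  exact Ideal.subset_span (by simp)
lemma rel2 : qx k n 1 ^ 2 = 0 := by
  rw [qx, ← map_pow, Ideal.Quotient.eq_zero_iff_mem]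
  exact Ideal.subset_span (by simp)
lemma rel3 : qx k n 0 ^ n * qx k n 2 = 0 := by
  rw [qx, qx, ← map_pow, ← map_mul, Ideal.Quotient.eq_zero_iff_mem]
  exact Ideal.subset_span (by simp)
lemma rel4 : qx k n 1 * qx k n 0 ^ n = 0 := by
  rw [qx, qx, ← map_pow, ← map_mul, Ideal.Quotient.eq_zero_iff_mem]
  exact Ideal.subset_span (by simp)

lemma rho_mul (a b : ℕ) : rho k n a * rho k n b = if Odd a ∧ Odd b then 0 else rho k n (a + b) := by
  simp only [rho_def]
  split_ifs with h
  · rw [Nat.odd_iff, Nat.odd_iff] at h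
    rw [h.1, h.2]
    linear_combination (qx k n 2 ^ (a / 2)) * (qx k n 2 ^ (b / 2)) * rel2 k n
  · rw [Nat.odd_iff, Nat.odd_iff] at h
    have h1 : (a + b) % 2 = a % 2 + b % 2 := by omega
    have h2 : (a + b) / 2 = a / 2 + b / 2 := by omega
    rw [h1, h2, pow_add, pow_add]; ring

lemma isHom (p : k[X]) (m : ℕ) :
    MvPolynomial.IsWeightedHomogeneous (![0, 1, 2] : Fin 3 → ℕ)
      (aeval (MvPolynomial.X 0 : MvPolynomial (Fin 3) k) p * mon k m) m := by
  have h1 : MvPolynomial.IsWeightedHomogeneous (![0, 1, 2] : Fin 3 → ℕ) (mon k m) m := by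
    have := ((MvPolynomial.isWeightedHomogeneous_X k (![0, 1, 2] : Fin 3 → ℕ) 1).pow (m % 2)).mul
      ((MvPolynomial.isWeightedHomogeneous_X k (![0, 1, 2] : Fin 3 → ℕ) 2).pow (m / 2))
    have e : (m % 2) • (![0, 1, 2] : Fin 3 → ℕ) 1 + (m / 2) • (![0, 1, 2] : Fin 3 → ℕ) 2 = m := by
      simp; omega
    rwa [e] at this
  have h0 : MvPolynomial.IsWeightedHomogeneous (![0, 1, 2] : Fin 3 → ℕ)
      (aeval (MvPolynomial.X 0 : MvPolynomial (Fin 3) k) p) 0 := by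
    induction p using Polynomial.induction_on' with
    | add p q hp hq => rw [map_add]; exact hp.add hq
    | monomial i c =>
      rw [aeval_monomial]
      have := (MvPolynomial.isWeightedHomogeneous_C (![0, 1, 2] : Fin 3 → ℕ) c).mul
        ((MvPolynomial.isWeightedHomogeneous_X k (![0, 1, 2] : Fin 3 → ℕ) 0).pow i)
      simpa using this
  simpa using h0.mul h1

def Psi (m : ℕ) : k[X] →+ G k n m where
  toFun p := ⟨Ideal.Quotient.mk _ (aeval (MvPolynomial.X 0 : MvPolynomial (Fin 3) k) p * mon k m),
    ⟨_, isHom k p m, rfl⟩⟩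
  map_zero' := by ext; simp
  map_add' p q := by ext; simp [add_mul]

lemma Psi_apply (m : ℕ) (p : k[X]) : (Psi k n m p : R k n) = aeval (qx k n 0) p * rho k n m := by
  change Ideal.Quotient.mk _ _ = _
  rw [map_mul]
  congr 1
  have := Polynomial.aeval_algHom_apply (Ideal.Quotient.mkₐ k (I k n))
    (MvPolynomial.X 0 : MvPolynomial (Fin 3) k) p
  exact this.symm

lemma Psi_surj (m : ℕ) : Function.Surjective (Psi k n m) := by
  rintro ⟨_, q, hq, rfl⟩
  suffices h : ∃ p, aeval (qx k n 0) p * rho k n m = Ideal.Quotient.mk _ q by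
    obtain ⟨p, hp⟩ := h
    exact ⟨p, Subtype.ext ((Psi_apply k n m p).trans hp)⟩
  have hq : MvPolynomial.IsWeightedHomogeneous (![0, 1, 2] : Fin 3 → ℕ) q m := hq
  let L : AddSubgroup (R k n) :=
    ((AddMonoidHom.mulRight (rho k n m)).comp (aeval (R := k) (qx k n 0)).toAddMonoidHom).range
  suffices h : Ideal.Quotient.mk _ q ∈ L from h
  rw [q.as_sum, map_sum]
  refine sum_mem fun e he => ?_
  have hw := hq (MvPolynomial.mem_support_iff.1 he)
  rw [Finsupp.weight_apply, Finsupp.sum_fintype _ _ (by simp)] at hw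
  simp [Fin.sum_univ_three] at hw
  have hmon : Ideal.Quotient.mk (I k n) (MvPolynomial.monomial e (q.coeff e)) =
      algebraMap k (R k n) (q.coeff e) * (qx k n 0 ^ e 0 * qx k n 1 ^ e 1 * qx k n 2 ^ e 2) := by
    rw [MvPolynomial.monomial_eq, Finsupp.prod_fintype _ _ (by simp), Fin.prod_univ_three]
    simp only [map_mul, map_pow]
    rfl
  rw [hmon]
  by_cases h2 : 2 ≤ e 1
  · obtain ⟨j, hj⟩ := Nat.exists_eq_add_of_le h2
    have : qx k n 1 ^ e 1 = 0 := by rw [hj, pow_add, rel2, zero_mul]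
    rw [this]
    simp
  · refine ⟨Polynomial.monomial (e 0) (q.coeff e), ?_⟩
    have h1 : e 1 = m % 2 := by omega
    have h3 : e 2 = m / 2 := by omega
    change aeval (qx k n 0) (Polynomial.monomial (e 0) (q.coeff e)) * rho k n m = _
    rw [aeval_monomial, rho_def, h1, h3]; ring

lemma coeff_aeval (p : k[X]) (i : ℕ) :
    MvPolynomial.coeff (Finsupp.single 0 i) (aeval (MvPolynomial.X 0 : MvPolynomial (Fin 3) k) p)
      = p.coeff i := by
  induction p using Polynomial.induction_on' with
  | add p q hp hq => rw [map_add, MvPolynomial.coeff_add, hp, hq, Polynomial.coeff_add]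
  | monomial j c =>
    rw [aeval_monomial, MvPolynomial.algebraMap_eq, MvPolynomial.coeff_C_mul,
      MvPolynomial.coeff_X_pow, Polynomial.coeff_monomial]
    have : (Finsupp.single (0 : Fin 3) j = Finsupp.single 0 i) ↔ j = i :=
      (Finsupp.single_injective 0).eq_iff
    simp [this]

def ms (m : ℕ) : Fin 3 →₀ ℕ := Finsupp.single 1 (m % 2) + Finsupp.single 2 (m / 2)

lemma mon_eq (m : ℕ) : mon k m = MvPolynomial.monomial (ms m) 1 := by
  rw [mon, MvPolynomial.X_pow_eq_monomial, MvPolynomial.X_pow_eq_monomial,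
    MvPolynomial.monomial_mul, one_mul, ms]

lemma I_eq : I k n = Ideal.span ((fun s => MvPolynomial.monomial s (1 : k)) ''
    {Finsupp.single 0 (n + 1), Finsupp.single 1 2, Finsupp.single 0 n + Finsupp.single 2 1,
      Finsupp.single 1 1 + Finsupp.single 0 n}) := by
  rw [I]
  congr 1
  have hX : ∀ i, (MvPolynomial.X i : MvPolynomial (Fin 3) k) =
    MvPolynomial.monomial (Finsupp.single i 1) 1 := fun _ => rfl
  rw [Set.image_insert_eq, Set.image_insert_eq, Set.image_insert_eq, Set.image_singleton]
  simp only [MvPolynomial.X_pow_eq_monomial]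
  simp only [hX, MvPolynomial.monomial_mul, one_mul]

lemma Psi_coeff (m : ℕ) (p : k[X]) (h : Psi k n m p = 0) (i : ℕ) (hi : p.coeff i ≠ 0) :
    n + 1 ≤ i ∨ (m ≠ 0 ∧ n ≤ i) := by
  have h1 : aeval (MvPolynomial.X 0 : MvPolynomial (Fin 3) k) p * mon k m ∈ I k n := by
    rw [← Ideal.Quotient.eq_zero_iff_mem]
    exact congr(($h : R k n))
  rw [I_eq, MvPolynomial.mem_ideal_span_monomial_image] at h1
  have h2 : Finsupp.single 0 i + ms m ∈
      (aeval (MvPolynomial.X 0 : MvPolynomial (Fin 3) k) p * mon k m).support := by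
    rw [MvPolynomial.mem_support_iff, mon_eq, MvPolynomial.coeff_mul_monomial, coeff_aeval, mul_one]
    exact hi
  obtain ⟨s, hs, hle⟩ := h1 _ h2
  have a0 := hle 0
  have a1 := hle 1
  have a2 := hle 2
  simp only [Set.mem_insert_iff, Set.mem_singleton_iff] at hs
  rcases hs with rfl | rfl | rfl | rfl <;> simp [ms] at a0 a1 a2 <;> omega

lemma Psi_ker_zero (p : k[X]) : Psi k n 0 p = 0 ↔ X ^ (n + 1) ∣ p := by
  constructor
  · intro h
    rw [X_pow_dvd_iff]
    intro i hi
    by_contra hne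
    have := Psi_coeff k n 0 p h i hne
    omega
  · rintro ⟨q, rfl⟩
    apply Subtype.ext
    rw [Psi_apply, map_mul, map_pow, aeval_X, rel1]; simp

lemma x_rho (m : ℕ) (hm : m ≠ 0) : qx k n 0 ^ n * rho k n m = 0 := by
  rw [rho_def]
  rcases Nat.mod_two_eq_zero_or_one m with h | h
  · obtain ⟨j, hj⟩ : ∃ j, m / 2 = j + 1 := ⟨m / 2 - 1, by omega⟩
    rw [h, hj]
    linear_combination qx k n 2 ^ j * rel3 k n
  · rw [h]
    linear_combination qx k n 2 ^ (m / 2) * rel4 k n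

lemma Psi_ker (m : ℕ) (hm : m ≠ 0) (p : k[X]) : Psi k n m p = 0 ↔ X ^ n ∣ p := by
  constructor
  · intro h
    rw [X_pow_dvd_iff]
    intro i hi
    by_contra hne
    have := Psi_coeff k n m p h i hne
    omega
  · rintro ⟨q, rfl⟩
    apply Subtype.ext
    rw [Psi_apply, map_mul, map_pow, aeval_X, mul_right_comm, x_rho k n m hm]; simp

lemma exists_equiv {P E F : Type*} [AddCommGroup P] [AddCommGroup E] [AddCommGroup F]
    (φ : P →+ E) (ψ : P →+ F) (hφ : Function.Surjective φ) (hψ : Function.Surjective ψ)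
    (h : ∀ p, φ p = 0 ↔ ψ p = 0) : ∃ e : E ≃+ F, ∀ p, e (φ p) = ψ p := by
  have hk : φ.ker = ψ.ker := by ext p; exact h p
  let e1 := QuotientAddGroup.quotientKerEquivOfSurjective φ hφ
  let e2 := QuotientAddGroup.quotientKerEquivOfSurjective ψ hψ
  refine ⟨e1.symm.trans ((QuotientAddGroup.quotientAddEquivOfEq hk).trans e2), fun p => ?_⟩
  have : e1.symm (φ p) = QuotientAddGroup.mk p := by rw [AddEquiv.symm_apply_eq]; rfl
  simp only [AddEquiv.trans_apply, this]
  rfl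

end target
section final
variable (k : Type) [Field k] [CharZero k] (n : ℕ) (hn : 1 ≤ n)

lemma sc_add (p q : k[X]) : sc k n (p + q) = sc k n p + sc k n q := by
  simp [sc]

lemma sc_mul (p q : k[X]) : sc k n (p * q) = sc k n p * sc k n q := by
  simp [sc]

lemma sc_one : sc k n 1 = 1 := by
  simp [sc]

/-- the parametrization of the Ext groups by polynomials. -/
def Phi (m : ℕ) : k[X] →+ Ext (dat k n hn).MT (dat k n hn).MT m :=
  AddMonoidHom.mk' (fun p => sc k n p • (dat k n hn).γ m) (fun p q => by
    rw [sc_add, add_smul])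

lemma Phi_apply (m : ℕ) (p : k[X]) : Phi k n hn m p = sc k n p • (dat k n hn).γ m := rfl

lemma Phi_surj (m : ℕ) : Function.Surjective (Phi k n hn m) := by
  intro α
  obtain ⟨b, rfl⟩ := (dat k n hn).gen m α
  obtain ⟨p, hp⟩ := AdjoinRoot.mk_surjective (algebraMap (B k n) (A k n) b)
  refine ⟨p, ?_⟩
  rw [Phi_apply]
  exact (dat k n hn).smul_congr (by rw [mu_sc, hp]) m

lemma Phi_ker_zero (p : k[X]) : Phi k n hn 0 p = 0 ↔ X ^ (n + 1) ∣ p := by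
  rw [Phi_apply, Dat.ker0, mu_sc, AdjoinRoot.mk_eq_zero]

lemma Phi_ker (m : ℕ) (hm : m ≠ 0) (p : k[X]) : Phi k n hn m p = 0 ↔ X ^ n ∣ p := by
  rw [Phi_apply]
  rcases Nat.even_or_odd' m with ⟨j, rfl | rfl⟩
  · obtain ⟨i, rfl⟩ : ∃ i, j = i + 1 := ⟨j - 1, by omega⟩
    have hN : ∀ c, algebraMap (B k n) (A k n) ((dat k n hn).N * c) =
        (n + 1) * rt k n ^ n * algebraMap (B k n) (A k n) c := fun c => by
      rw [map_mul, ← NN_eval, ← mu_ppi]; rfl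
    refine ((dat k n hn).ker_even i _).trans ?_
    simp only [mu_sc, hN]
    constructor
    · rintro ⟨c, hc⟩
      obtain ⟨q, hq⟩ := AdjoinRoot.mk_surjective (algebraMap (B k n) (A k n) c)
      have h0 : AdjoinRoot.mk ((X : k[X]) ^ (n + 1)) (p - X ^ n * (((n : k[X]) + 1) * q)) = 0 := by
        rw [map_sub, hc, ← hq, ← mk_rt, map_mul, map_add, map_natCast, map_one]
        ring
      rw [AdjoinRoot.mk_eq_zero] at h0
      have h1 := (pow_dvd_pow X (Nat.le_succ n)).trans h0
      exact (dvd_sub_left (dvd_mul_right _ _)).1 h1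
    · rintro ⟨q, rfl⟩
      refine ⟨sc k n (C ((n : k) + 1)⁻¹ * q), ?_⟩
      have hC : AdjoinRoot.mk ((X : k[X]) ^ (n + 1)) (C ((n : k) + 1)⁻¹) =
        algebraMap k (A k n) ((n : k) + 1)⁻¹ := rfl
      rw [mu_sc, ← mk_rt, map_mul, hC]
      linear_combination -rt k n ^ n * AdjoinRoot.mk _ q * np1 k n
  · refine ((dat k n hn).ker_odd j _).trans ?_
    have hx : algebraMap (B k n) (A k n) (dat k n hn).x = rt k n := by
      change algebraMap (B k n) (A k n) (ppi k n (C (rt k n))) = rt k n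
      rw [mu_ppi, eval_C]
    have h1 := mk_rt k n p 1
    rw [pow_one, pow_one] at h1
    rw [map_mul, mu_sc, hx, mul_comm, h1, AdjoinRoot.mk_eq_zero, pow_succ']
    exact mul_dvd_mul_iff_left X_ne_zero

lemma main : ∃ e : ∀ m : ℕ, Ext (dat k n hn).MT (dat k n hn).MT m ≃+ G k n m,
      ((e 0 (Ext.mk₀ (𝟙 (dat k n hn).MT)) : R k n) = 1) ∧
      ∀ (a b : ℕ) (α : Ext (dat k n hn).MT (dat k n hn).MT a)
        (β : Ext (dat k n hn).MT (dat k n hn).MT b),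
        ((e (a + b) (α.comp β rfl) : R k n) = (e a α : R k n) * (e b β : R k n)) := by
  have key : ∀ m, ∃ e : Ext (dat k n hn).MT (dat k n hn).MT m ≃+ G k n m,
      ∀ p, e (Phi k n hn m p) = Psi k n m p := fun m =>
    exists_equiv _ _ (Phi_surj k n hn m) (Psi_surj k n m) fun p => by
      by_cases hm : m = 0
      · subst hm
        rw [Phi_ker_zero, Psi_ker_zero]
      · rw [Phi_ker k n hn m hm, Psi_ker k n m hm]
  choose e he using key
  refine ⟨e, ?_, fun a b α β => ?_⟩
  · have h : Ext.mk₀ (𝟙 (dat k n hn).MT) = Phi k n hn 0 1 := by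
      rw [Phi_apply, sc_one, one_smul]; rfl
    rw [h, he, Psi_apply, rho_def]
    simp
  · obtain ⟨p, rfl⟩ := Phi_surj k n hn a α
    obtain ⟨q, rfl⟩ := Phi_surj k n hn b β
    have h : (Phi k n hn a p).comp (Phi k n hn b q) rfl =
        if Odd a ∧ Odd b then 0 else Phi k n hn (a + b) (p * q) := by
      simp only [Phi_apply]
      rw [Ext.smul_comp, Ext.comp_smul, Dat.γ_mul, smul_smul, sc_mul]
      split_ifs
      · rw [smul_zero]
      · rfl
    rw [h, he, he, Psi_apply, Psi_apply]
    have hr := rho_mul k n a b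
    split_ifs at hr ⊢ with hab
    · rw [map_zero]
      rw [mul_mul_mul_comm, hr, mul_zero]; rfl
    · rw [he, Psi_apply, map_mul, mul_mul_mul_comm, hr]

end final

end HHaux

/-- for a field `k` of characteristic zero, the graded ring
`HH^*(A;A) = ⊕ₘ Ext^m_B(A,A)` with the Yoneda (composition) product is isomorphic as a
graded ring to `k[x,u,t]/(x^{n+1}, u², xⁿt, uxⁿ)` with `x, u, t` in degrees `0, 1, 2`. -/
theorem stmt8 (k : Type) [Field k] [CharZero k] (n : ℕ) (hn : 1 ≤ n) :
    ∃ e : ∀ m : ℕ, Abelian.Ext (M k n) (M k n) m ≃+ G k n m,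
      ((e 0 (Abelian.Ext.mk₀ (𝟙 (M k n))) : R k n) = 1) ∧
      ∀ (a b : ℕ) (α : Abelian.Ext (M k n) (M k n) a) (β : Abelian.Ext (M k n) (M k n) b),
        ((e (a + b) (α.comp β rfl) : R k n) = (e a α : R k n) * (e b β : R k n)) := by
  exact HHaux.main k n hn

end
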